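/- Let k_max = max_{i∈𝒳} K_i. For every b ∈ ℤ and k ∈ ℕ: inf_{R∈𝓡(k)} Pr_{R,Γ}(S^{b,k}) ≤ inf_{R∈𝓡} Pr_{R,Γ}(S^{b, k − k_max}). -/

import Mathlib

/-!
Given a rules mapping `R`, let `R'` follow `R` as long as the coverage `κ` of the current word is
at most `k - kmax`, and afterwards always use a group `j₀` all of whose coverages are at most `1`.
Then `R'` is `k`-consistent. A process driven by `R'` that reaches coverage `k` within budget `b`
has reached coverage `k - kmax` within budget `b` before, and up to that moment it chose the same
groups as `R`; hence `Pr_{R'}(S^{b,k}) ≤ Pr_R(S^{b,k-kmax})`, and passing to infima gives the claim.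

The comparison of probabilities (`RB.PrS_le_of_agree`) is an induction on the budget, which works
because every letter costs at least `1`. It rests on conditioning on the first letter
(`RB.PrS_rec`): `Pr_R(S^{b,k})` is the average over the first letter `a` of `Pr` for the mapping
`R (a :: ·)` with budget `b - B_a` and target `k - K_a`.
-/

open scoped Classical

noncomputable section

namespace RB

/-- The alphabet `𝒳`, given as the disjoint union of the groups `𝒳_j`. -/
abbrev X (N : ℕ) (r : Fin N → ℕ) : Type := (j : Fin N) × Fin (r j)

variable {N : ℕ} {r : Fin N → ℕ}

/-- the coverage `κ` of a word (`K` is the concatenation of the `k̄ʲ`) -/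
def kap (K : (j : Fin N) → Fin (r j) → ℕ) (l : List (X N r)) : ℕ :=
  (l.map fun a => K a.1 a.2).sum

/-- the cost `μ` of a word (`B` is the concatenation of the `b̄ʲ`) -/
def mu (B : (j : Fin N) → Fin (r j) → ℕ) (l : List (X N r)) : ℕ :=
  (l.map fun a => B a.1 a.2).sum

/-- `P_{R,Υ}(ā) = ∏_ℓ [Υ_{a_ℓ}` if `a_ℓ ∈ 𝒳_{R(a_1,…,a_{ℓ-1})}`, else `0]` -/
def wordP (R : List (X N r) → Fin N) (Υ : (j : Fin N) → Fin (r j) → ℝ)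
    (l : List (X N r)) : ℝ :=
  ∏ ℓ : Fin l.length,
    if (l.get ℓ).1 = R (l.take ℓ.1) then Υ (l.get ℓ).1 (l.get ℓ).2 else 0

/-- the set of words `A^{b,k}` -/
def ASet (B K : (j : Fin N) → Fin (r j) → ℕ) (bb kb : ℝ) : Set (List (X N r)) :=
  if bb < 0 then ∅
  else if kb ≤ 0 then {[]}
  else {l | l ≠ [] ∧ (mu B l : ℝ) ≤ bb ∧ kb ≤ (kap K l : ℝ) ∧ (kap K l.dropLast : ℝ) < kb}

/-- `Pr_{R,Υ}(S^{b,k}) = Σ_{ā ∈ A^{b,k}} P_{R,Υ}(ā)` (the set `A^{b,k}` is finite,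
so the `tsum` is the finite sum) -/
def PrS (B K : (j : Fin N) → Fin (r j) → ℕ) (R : List (X N r) → Fin N)
    (Υ : (j : Fin N) → Fin (r j) → ℝ) (bb kb : ℝ) : ℝ :=
  ∑' l : ASet B K bb kb, wordP R Υ l.1

/-- `k`-consistent rules mappings: whenever `κ(ā) < k`, every `i ∈ 𝒳_{R(ā)}`
satisfies `K_i ≤ k - κ(ā)`. -/
def Consistent (K : (j : Fin N) → Fin (r j) → ℕ) (k : ℕ)
    (R : List (X N r) → Fin N) : Prop :=
  ∀ l : List (X N r), kap K l < k → ∀ i : Fin (r (R l)), K (R l) i + kap K l ≤ k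

/-- Kullback-Leibler divergence -/
def KL {ρ : ℕ} (q g : Fin ρ → ℝ) : ℝ := ∑ i, q i * Real.log (q i / g i)

/-- the set of values of the `α`-branching optimization problem -/
def BrSet (α : ℝ) {ρ : ℕ} (bv kv : Fin ρ → ℕ) (g : Fin ρ → ℝ) : Set ℝ :=
  {x | ∃ q : Fin ρ → ℝ, (∀ i, 0 ≤ q i) ∧ (∑ i, q i = 1) ∧
        (∑ i, q i * (bv i : ℝ)) ≤ α * ∑ i, q i * (kv i : ℝ) ∧
        x = KL q g / ∑ i, q i * (kv i : ℝ)}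

end RB

namespace RB

/-! ### Words: probability, coverage and cost -/

lemma wordP_nil {N : ℕ} {r : Fin N → ℕ} (R : List (X N r) → Fin N)
    (Υ : (j : Fin N) → Fin (r j) → ℝ) : wordP R Υ [] = 1 := by
  simp [wordP]

lemma wordP_cons {N : ℕ} {r : Fin N → ℕ} (R : List (X N r) → Fin N)
    (Υ : (j : Fin N) → Fin (r j) → ℝ) (a : X N r) (l : List (X N r)) :
    wordP R Υ (a :: l) =
      (if a.1 = R [] then Υ a.1 a.2 else 0) * wordP (fun w => R (a :: w)) Υ l := by
  unfold wordP
  exact Fin.prod_univ_succ (n := l.length) _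

lemma kap_cons {N : ℕ} {r : Fin N → ℕ} (K : (j : Fin N) → Fin (r j) → ℕ) (a : X N r)
    (l : List (X N r)) : kap K (a :: l) = K a.1 a.2 + kap K l := by
  simp [kap]

lemma mu_cons {N : ℕ} {r : Fin N → ℕ} (B : (j : Fin N) → Fin (r j) → ℕ) (a : X N r)
    (l : List (X N r)) : mu B (a :: l) = B a.1 a.2 + mu B l := by
  simp [mu]

lemma length_le_mu {N : ℕ} {r : Fin N → ℕ} (B : (j : Fin N) → Fin (r j) → ℕ)
    (hB : ∀ j i, 1 ≤ B j i) (l : List (X N r)) : l.length ≤ mu B l := by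
  induction l with
  | nil => simp
  | cons a l ih =>
    rw [mu_cons, List.length_cons]
    have := hB a.1 a.2
    omega

lemma wordP_nonneg {N : ℕ} {r : Fin N → ℕ} (R : List (X N r) → Fin N)
    (Υ : (j : Fin N) → Fin (r j) → ℝ) (hΥ : ∀ j i, 0 ≤ Υ j i) (l : List (X N r)) :
    0 ≤ wordP R Υ l := by
  unfold wordP
  refine Finset.prod_nonneg fun i _ => ?_
  split_ifs
  · exact hΥ _ _
  · exact le_rfl

/-! ### Conditioning on the first letter -/

lemma PrS_nonneg {N : ℕ} {r : Fin N → ℕ} (B K : (j : Fin N) → Fin (r j) → ℕ)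
    (R : List (X N r) → Fin N) (Υ : (j : Fin N) → Fin (r j) → ℝ) (hΥ : ∀ j i, 0 ≤ Υ j i)
    (b k : ℝ) : 0 ≤ PrS B K R Υ b k :=
  tsum_nonneg fun l => wordP_nonneg R Υ hΥ l.1

lemma PrS_of_neg {N : ℕ} {r : Fin N → ℕ} (B K : (j : Fin N) → Fin (r j) → ℕ)
    (R : List (X N r) → Fin N) (Υ : (j : Fin N) → Fin (r j) → ℝ) {b : ℝ} (k : ℝ) (hb : b < 0) :
    PrS B K R Υ b k = 0 := by
  have h : ASet B K b k = ∅ := if_pos hb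
  unfold PrS
  rw [h]
  exact tsum_empty

lemma PrS_of_nonpos {N : ℕ} {r : Fin N → ℕ} (B K : (j : Fin N) → Fin (r j) → ℕ)
    (R : List (X N r) → Fin N) (Υ : (j : Fin N) → Fin (r j) → ℝ) {b k : ℝ} (hb : 0 ≤ b)
    (hk : k ≤ 0) : PrS B K R Υ b k = 1 := by
  have h : ASet B K b k = {[]} := by
    unfold ASet
    rw [if_neg (not_lt.2 hb), if_pos hk]
  unfold PrS
  rw [h, tsum_singleton, wordP_nil]

lemma finite_ASet {N : ℕ} {r : Fin N → ℕ} (B K : (j : Fin N) → Fin (r j) → ℕ)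
    (hB : ∀ j i, 1 ≤ B j i) (b k : ℝ) : (ASet B K b k).Finite := by
  unfold ASet
  split_ifs with h1 h2
  · exact Set.finite_empty
  · exact Set.finite_singleton _
  · refine (List.finite_length_le (X N r) ⌊b⌋₊).subset ?_
    rintro l ⟨-, hl, -⟩
    exact (length_le_mu B hB l).trans (Nat.le_floor hl)

lemma nil_notMem_ASet {N : ℕ} {r : Fin N → ℕ} (B K : (j : Fin N) → Fin (r j) → ℕ) (b : ℝ)
    {k : ℝ} (hk : 0 < k) : [] ∉ ASet B K b k := by
  unfold ASet
  split_ifs with h1 h2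
  · simp
  · exact absurd h2 (not_le.2 hk)
  · simp

lemma cons_mem_ASet {N : ℕ} {r : Fin N → ℕ} (B K : (j : Fin N) → Fin (r j) → ℕ) {b k : ℝ}
    (hb : 0 ≤ b) (hk : 0 < k) (a : X N r) (l : List (X N r)) :
    a :: l ∈ ASet B K b k ↔ l ∈ ASet B K (b - B a.1 a.2) (k - K a.1 a.2) := by
  unfold ASet
  rw [if_neg (not_lt.2 hb), if_neg (not_le.2 hk)]
  cases l with
  | nil =>
    split_ifs with h1 h2
    · simp [mu]
      intro h
      linarith
    · simp [mu, kap]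
      exact ⟨by linarith, by linarith, hk⟩
    · simp [mu, kap]
      intro _ h
      linarith
  | cons c l =>
    have hd : (a :: c :: l).dropLast = a :: (c :: l).dropLast := rfl
    simp only [Set.mem_ofPred_eq, hd, mu_cons B a, kap_cons K a, Nat.cast_add]
    have hm : (0 : ℝ) ≤ mu B (c :: l) := Nat.cast_nonneg _
    have hq : (0 : ℝ) ≤ kap K (c :: l).dropLast := Nat.cast_nonneg _
    split_ifs with h1 h2
    · simp only [Set.mem_empty_iff_false, iff_false]
      rintro ⟨-, h, -⟩
      linarith
    · simp only [Set.mem_singleton_iff, reduceCtorEq, iff_false]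
      rintro ⟨-, -, -, h⟩
      linarith
    · simp only [Set.mem_ofPred_eq]
      constructor
      · rintro ⟨-, h3, h4, h5⟩
        exact ⟨by simp, by linarith, by linarith, by linarith⟩
      · rintro ⟨-, h3, h4, h5⟩
        exact ⟨by simp, by linarith, by linarith, by linarith⟩

/-- Conditioning on the first letter: the words of `A^{b,k}` starting with `a` are the
`a :: l` with `l ∈ A^{b - B_a, k - K_a}`. -/
lemma PrS_rec {N : ℕ} {r : Fin N → ℕ} (B K : (j : Fin N) → Fin (r j) → ℕ)
    (hB : ∀ j i, 1 ≤ B j i) (R : List (X N r) → Fin N) (Υ : (j : Fin N) → Fin (r j) → ℝ)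
    {b k : ℝ} (hb : 0 ≤ b) (hk : 0 < k) :
    PrS B K R Υ b k = ∑ i, Υ (R []) i *
      PrS B K (fun w => R (⟨R [], i⟩ :: w)) Υ (b - B (R []) i) (k - K (R []) i) := by
  have fin : ∀ a : X N r, Finite (ASet B K (b - B a.1 a.2) (k - K a.1 a.2)) :=
    fun a => (finite_ASet B K hB _ _).to_subtype
  -- Prepending the first letter is a bijection from `Σ a, A^{b - B_a, k - K_a}` onto `A^{b,k}`.
  let f : (Σ a : X N r, ASet B K (b - B a.1 a.2) (k - K a.1 a.2)) → ASet B K b k :=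
    fun p => ⟨p.1 :: p.2.1, (cons_mem_ASet B K hb hk p.1 p.2.1).2 p.2.2⟩
  have hf : Function.Bijective f := by
    constructor
    · rintro ⟨a, l, hl⟩ ⟨a', l', hl'⟩ h
      have h' : a :: l = a' :: l' := congrArg Subtype.val h
      obtain ⟨rfl, rfl⟩ := List.cons.inj h'
      rfl
    · rintro ⟨l, hl⟩
      cases l with
      | nil => exact absurd hl (nil_notMem_ASet B K b hk)
      | cons a l => exact ⟨⟨a, l, (cons_mem_ASet B K hb hk a l).1 hl⟩, rfl⟩
  have key : PrS B K R Υ b k = ∑ a : X N r, (if a.1 = R [] then Υ a.1 a.2 else 0) *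
      PrS B K (fun w => R (a :: w)) Υ (b - B a.1 a.2) (k - K a.1 a.2) := by
    unfold PrS
    rw [← (Equiv.ofBijective f hf).tsum_eq, Summable.tsum_sigma' (fun _ => Summable.of_finite)
      Summable.of_finite, tsum_fintype]
    refine Finset.sum_congr rfl fun a _ => ?_
    rw [← tsum_mul_left]
    exact tsum_congr fun l => wordP_cons R Υ a l.1
  rw [key, Fintype.sum_sigma, Finset.sum_eq_single (R [])]
  · simp
  · intro j _ hj
    simp [hj]
  · simp

/-! ### Comparison of two rules mappings -/

lemma PrS_le_one {N : ℕ} {r : Fin N → ℕ} (B K : (j : Fin N) → Fin (r j) → ℕ)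
    (hB : ∀ j i, 1 ≤ B j i) (Υ : (j : Fin N) → Fin (r j) → ℝ) (hΥ : ∀ j i, 0 ≤ Υ j i)
    (hsum : ∀ j, ∑ i, Υ j i = 1) (n : ℕ) :
    ∀ (R : List (X N r) → Fin N) (b k : ℝ), b < n → PrS B K R Υ b k ≤ 1 := by
  induction n with
  | zero =>
    intro R b k hb
    rw [PrS_of_neg B K R Υ k (by simpa using hb)]
    exact zero_le_one
  | succ n ih =>
    intro R b k hbn
    rcases lt_or_ge b 0 with hb | hb
    · rw [PrS_of_neg B K R Υ k hb]
      exact zero_le_one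
    rcases le_or_gt k 0 with hk | hk
    · rw [PrS_of_nonpos B K R Υ hb hk]
    rw [PrS_rec B K hB R Υ hb hk, ← hsum (R [])]
    refine Finset.sum_le_sum fun i _ => mul_le_of_le_one_right (hΥ _ _) (ih _ _ _ ?_)
    have h1 : (1 : ℝ) ≤ B (R []) i := by exact_mod_cast hB _ _
    push_cast at hbn
    linarith

/-- If `R'` and `R` agree on all words whose coverage is below `k - c`, then reaching coverage `k`
under `R'` is at most as likely as reaching coverage `k - c` under `R`, for the same budget.
The natural number `n` bounding the budget drives the induction. -/
lemma PrS_le_of_agree {N : ℕ} {r : Fin N → ℕ} (B K : (j : Fin N) → Fin (r j) → ℕ)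
    (hB : ∀ j i, 1 ≤ B j i) (Υ : (j : Fin N) → Fin (r j) → ℝ) (hΥ : ∀ j i, 0 ≤ Υ j i)
    (hsum : ∀ j, ∑ i, Υ j i = 1) {c : ℝ} (hc : 0 ≤ c) (n : ℕ) :
    ∀ (R' R : List (X N r) → Fin N) (b k : ℝ), b < n →
      (∀ l, (kap K l : ℝ) < k - c → R' l = R l) →
      PrS B K R' Υ b k ≤ PrS B K R Υ b (k - c) := by
  induction n with
  | zero =>
    intro R' R b k hb _
    have hb' : b < 0 := by simpa using hb
    rw [PrS_of_neg B K R' Υ k hb', PrS_of_neg B K R Υ _ hb']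
  | succ n ih =>
    intro R' R b k hbn hR
    rcases lt_or_ge b 0 with hb | hb
    · rw [PrS_of_neg B K R' Υ k hb, PrS_of_neg B K R Υ _ hb]
    rcases le_or_gt (k - c) 0 with hk | hk
    · rw [PrS_of_nonpos B K R Υ hb hk]
      exact PrS_le_one B K hB Υ hΥ hsum (n + 1) R' b k hbn
    have h0 : R' [] = R [] := hR [] (by simpa [kap] using hk)
    rw [PrS_rec B K hB R' Υ hb (by linarith), PrS_rec B K hB R Υ hb hk, h0]
    refine Finset.sum_le_sum fun i _ => mul_le_mul_of_nonneg_left ?_ (hΥ _ _)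
    have h1 : (1 : ℝ) ≤ B (R []) i := by exact_mod_cast hB _ _
    push_cast at hbn
    rw [sub_right_comm k c]
    refine ih _ _ _ _ (by linarith) fun l hl => hR _ ?_
    rw [kap_cons, Nat.cast_add]
    linarith

end RB

/-- Lemma 12, `con_via_non_con`.  With
`k_max = max_{i∈𝒳} K_i`, for every `b ∈ ℤ` and `k ∈ ℕ`:
`inf_{R∈𝓡(k)} Pr_{R,Γ}(S^{b,k}) ≤ inf_{R∈𝓡} Pr_{R,Γ}(S^{b, k-k_max})`. -/
theorem stmt_13
    (N : ℕ) (hN : 1 ≤ N) (r : Fin N → ℕ) (hr : ∀ j, 1 ≤ r j)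
    (bb kb : (j : Fin N) → Fin (r j) → ℕ)
    (hbb : ∀ j i, 1 ≤ bb j i)
    (γ : (j : Fin N) → Fin (r j) → ℝ)
    (hγpos : ∀ j i, 0 < γ j i) (hγsum : ∀ j, ∑ i, γ j i = 1)
    (hks : ∃ j, ∀ i, kb j i ≤ 1)
    (kmax : ℕ)
    (hkmax : kmax = Finset.univ.sup fun a : RB.X N r => kb a.1 a.2) :
    ∀ (bz : ℤ) (k : ℕ),
      sInf {x | ∃ R : List (RB.X N r) → Fin N,
          RB.Consistent kb k R ∧ x = RB.PrS bb kb R γ (bz : ℝ) (k : ℝ)} ≤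
        sInf {x | ∃ R : List (RB.X N r) → Fin N,
          x = RB.PrS bb kb R γ (bz : ℝ) ((k : ℝ) - (kmax : ℝ))} := by
  intro bz k
  obtain ⟨j₀, hj₀⟩ := hks
  have hγ : ∀ j i, 0 ≤ γ j i := fun j i => (hγpos j i).le
  have hle : ∀ j i, kb j i ≤ kmax := fun j i => by
    rw [hkmax]
    exact Finset.le_sup (f := fun a : RB.X N r => kb a.1 a.2) (Finset.mem_univ ⟨j, i⟩)
  refine le_csInf ⟨_, fun _ => j₀, rfl⟩ ?_
  rintro x ⟨R, rfl⟩
  let R' : List (RB.X N r) → Fin N := fun l => if RB.kap kb l + kmax ≤ k then R l else j₀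
  -- While `κ + kmax ≤ k` any group is admissible; below `k`, the group `j₀` always is.
  have hcons : RB.Consistent kb k R' := by
    intro l hl i
    by_cases h : RB.kap kb l + kmax ≤ k
    · have := hle (R' l) i
      omega
    · have hR' : R' l = j₀ := if_neg h
      have hone : ∀ j, j = j₀ → ∀ i, kb j i ≤ 1 := by
        rintro j rfl
        exact hj₀
      have := hone _ hR' i
      omega
  refine csInf_le_of_le ⟨0, ?_⟩ ⟨R', hcons, rfl⟩ ?_
  · rintro x ⟨S, -, rfl⟩
    exact RB.PrS_nonneg bb kb S γ hγ _ _
  · obtain ⟨n, hn⟩ := exists_nat_gt (bz : ℝ)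
    refine RB.PrS_le_of_agree bb kb hbb γ hγ hγsum (Nat.cast_nonneg kmax) n R' R _ _ hn ?_
    intro l hl
    refine if_pos ?_
    have : (RB.kap kb l : ℝ) + kmax < k := by linarith
    exact_mod_cast this.le
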